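/- arXiv:2003.08722 — 2 statements merged into one kernel-verified Lean document; each statement's English description precedes it below -/
import Mathlib

section
/- (Salzmann's theorem) Let Λ = (λ_1, λ_2, …, λ_n) be a list of real numbers with λ_1 ≥ λ_2 ≥ … ≥ λ_n, such that ∑_{k=1}^n λ_k ≥ 0 and λ_k + λ_{n−k+1} ≤ (2/n)·∑_{j=1}^n λ_j for every k = 2, 3, …, ⌊(n+1)/2⌋. Then Λ is realizable. -/
open Polynomial Matrix Finset

/-- A list of real numbers is realizable if it is the spectrum (counted with
algebraic multiplicity) of an entrywise nonnegative real matrix. -/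
def RealRealizable {n : ℕ} (l : Fin n → ℝ) : Prop :=
  ∃ A : Matrix (Fin n) (Fin n) ℝ, (∀ i j, 0 ≤ A i j) ∧
    A.charpoly = ∏ i, (X - C (l i))

/-!
Pair the eigenvalues by an involution and put on each pair `a`, `b` the symmetric block with
diagonal entries `(a + b) / 2` and off-diagonal entries `|a - b| / 2`, whose eigenvalues are `a`
and `b`. By Brauer's theorem, adding `u vᵀ` to `A` does not change the spectrum when `vᵀ u = 0` and
`u` is a right or `v` a left eigenvector of `A`. This is used twice. The indicator `f` of the pair
`{o, σ o}` formed by the extreme eigenvalues is a left eigenvector of the block matrix, so a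
term `w fᵀ` with `w` vanishing on that pair can be added to make all row sums equal. Then the
all-ones vector is a right eigenvector, and a term `1 qᵀ` with `∑ q = 0` makes the diagonal
nonnegative.
-/

section Brauer

variable {ι R : Type*} [Fintype ι] [DecidableEq ι] [CommRing R]

lemma charmatrix_mulVec_of_mulVec_eq_smul {A : Matrix ι ι R} {u : ι → R} {c : R}
    (h : A *ᵥ u = c • u) : A.charmatrix *ᵥ (C ∘ u) = (X - C c) • (C ∘ u) := by
  ext1 i
  rw [charmatrix, sub_mulVec, Pi.sub_apply, RingHom.mapMatrix_apply, ← RingHom.map_mulVec, h]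
  simp [mulVec_diagonal, sub_mul]

/-- **Brauer's theorem** on rank-one perturbations along an eigenvector, multiplied out to avoid
dividing by `X - C c`. -/
theorem X_sub_C_mul_charpoly_add_vecMulVec {A : Matrix ι ι R} {u : ι → R} {c : R}
    (h : A *ᵥ u = c • u) (v : ι → R) :
    (X - C c) * (A + vecMulVec u v).charpoly = (X - C (c + u ⬝ᵥ v)) * A.charpoly := by
  set d : R[X] := X - C c with hd
  have factorization : d • (A + vecMulVec u v).charmatrix =
      A.charmatrix * (scalar ι d - vecMulVec (C ∘ u) (C ∘ v)) := by
    rw [mul_sub, mul_vecMulVec, charmatrix_mulVec_of_mulVec_eq_smul h]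
    ext1 i j
    simp [charmatrix_apply, vecMulVec_apply, ← hd]
    ring
  have dets : d ^ Fintype.card ι * (A + vecMulVec u v).charpoly =
      A.charpoly * (d ^ Fintype.card ι - C (u ⬝ᵥ v) * d ^ (Fintype.card ι - 1)) := by
    have := congrArg det factorization
    rw [det_smul, det_mul, ← eval_charpoly, charpoly_vecMulVec] at this
    simpa [charpoly, dotProduct, Function.comp_def] using this
  cases isEmpty_or_nonempty ι
  · simp [hd, charpoly]
  · obtain ⟨m, hm⟩ := Nat.exists_eq_succ_of_ne_zero (Fintype.card_ne_zero (α := ι))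
    apply ((monic_X_sub_C c).pow m).isRegular.left
    rw [hm, Nat.succ_sub_one, pow_succ] at dets
    simp only [C_add, ← sub_sub, ← hd]
    linear_combination dets

theorem charpoly_add_vecMulVec_of_mulVec_eq_smul {A : Matrix ι ι R} {u v : ι → R} {c : R}
    (h : A *ᵥ u = c • u) (huv : u ⬝ᵥ v = 0) : (A + vecMulVec u v).charpoly = A.charpoly :=
  (monic_X_sub_C c).isRegular.left <| by
    simpa only [huv, add_zero] using X_sub_C_mul_charpoly_add_vecMulVec h v

theorem charpoly_add_vecMulVec_of_vecMul_eq_smul {A : Matrix ι ι R} {u v : ι → R} {c : R}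
    (h : v ᵥ* A = c • v) (huv : u ⬝ᵥ v = 0) : (A + vecMulVec u v).charpoly = A.charpoly := by
  rw [← charpoly_transpose, transpose_add, transpose_vecMulVec, ← charpoly_transpose A]
  exact charpoly_add_vecMulVec_of_mulVec_eq_smul (by rwa [mulVec_transpose])
    (by rwa [dotProduct_comm])

end Brauer

lemma charpoly_eq_of_mul_eq_mul {ι R : Type*} [Fintype ι] [DecidableEq ι] [CommRing R]
    {A B S : Matrix ι ι R} (hS : IsUnit S) (h : A * S = S * B) : A.charpoly = B.charpoly := by
  obtain ⟨S, rfl⟩ := hS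
  rw [← charpoly_units_conj S B, ← h, mul_assoc, ← coe_units_inv, S.mul_inv, mul_one]

/-- The matrix with diagonal `a` and with `b i` added in position `(i, σ i)`. For an involution
`σ` it is a direct sum of `2 × 2` blocks on the two-element orbits and of the scalars `a i + b i`
on the fixed points. -/
def pairMatrix {ι R : Type*} [DecidableEq ι] [AddZeroClass R] (σ : ι → ι) (a b : ι → R) :
    Matrix ι ι R :=
  diagonal a + of fun i j => if j = σ i then b i else 0

section PairMatrix

variable {ι R : Type*} [DecidableEq ι] {σ : ι → ι}

lemma pairMatrix_zero_right [AddZeroClass R] (a : ι → R) : pairMatrix σ a 0 = diagonal a := by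
  ext i j
  simp [pairMatrix]

lemma transpose_pairMatrix [AddZeroClass R] (hσ : σ.Involutive) (a b : ι → R) :
    (pairMatrix σ a b)ᵀ = pairMatrix σ a (b ∘ σ) := by
  rw [pairMatrix, transpose_add, diagonal_transpose, pairMatrix]
  congr 1
  ext i j
  have hij : i = σ j ↔ j = σ i := eq_comm.trans hσ.eq_iff
  by_cases h : j = σ i <;> simp [hij, h, hσ i]

variable [Fintype ι]

lemma pairMatrix_mulVec [NonAssocSemiring R] (a b v : ι → R) (i : ι) :
    (pairMatrix σ a b *ᵥ v) i = a i * v i + b i * v (σ i) := by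
  rw [pairMatrix, add_mulVec, Pi.add_apply, mulVec_diagonal]
  simp [mulVec, dotProduct]

lemma pairMatrix_mul [CommSemiring R] (hσ : σ.Involutive) (a b c d : ι → R) :
    pairMatrix σ a b * pairMatrix σ c d =
      pairMatrix σ (a * c + b * (d ∘ σ)) (a * d + b * (c ∘ σ)) := by
  apply mulVec_injective
  ext v i
  simp only [← mulVec_mulVec, pairMatrix_mulVec, Pi.add_apply, Pi.mul_apply, Function.comp_apply,
    hσ i]
  ring

end PairMatrix

section Pairs

variable {ι K : Type*} [Field K]

/-- Half the sum of the two entries of `l` paired by `σ`. -/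
def pairMean (σ : ι → ι) (l : ι → K) (i : ι) : K :=
  (l i + l (σ i)) / 2

/-- The indicator of the pair `{o, σ o}`, counted twice at `o` if `σ o = o`. -/
def pairIndicator (K : Type*) [Field K] [DecidableEq ι] (σ : ι → ι) (o : ι) : ι → K :=
  Pi.single o 1 + Pi.single (σ o) 1

variable {σ : ι → ι} (l : ι → K)

lemma pairMean_apply_involutive (hσ : σ.Involutive) (i : ι) :
    pairMean σ l (σ i) = pairMean σ l i := by
  rw [pairMean, pairMean, hσ i, add_comm]

lemma pairIndicator_apply_involutive [DecidableEq ι] (hσ : σ.Involutive) (o i : ι) :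
    pairIndicator K σ o (σ i) = pairIndicator K σ o i := by
  simp only [pairIndicator, Pi.add_apply, Pi.single_apply, hσ.injective.eq_iff,
    hσ.eq_iff (y := o)]
  exact add_comm _ _

lemma pairIndicator_of_ne [DecidableEq ι] {o i : ι} (hi : i ≠ o) (hi' : i ≠ σ o) :
    pairIndicator K σ o i = 0 := by
  simp [pairIndicator, hi, hi']

lemma dotProduct_pairIndicator [Fintype ι] [DecidableEq ι] (x : ι → K) (o : ι) :
    x ⬝ᵥ pairIndicator K σ o = x o + x (σ o) := by
  simp [pairIndicator]

lemma sum_sub_pairMean [Fintype ι] [NeZero (2 : K)] (hσ : σ.Involutive) (μ : K) :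
    ∑ i, (μ - pairMean σ l i) = Fintype.card ι * μ - ∑ i, l i := by
  simp only [pairMean, sum_sub_distrib, ← sum_div, sum_add_distrib, hσ.bijective.sum_comp l,
    sum_const, card_univ, nsmul_eq_mul, add_self_div_two]

variable [LinearOrder K]

/-- Half the distance between the two entries of `l` paired by `σ`. -/
def pairDev (σ : ι → ι) (l : ι → K) (i : ι) : K :=
  |l i - l (σ i)| / 2

/-- The symmetric block matrix that has, on each pair, the mean of the two entries of `l` on the
diagonal and their deviation off the diagonal. -/
def pairCore [DecidableEq ι] (σ : ι → ι) (l : ι → K) : Matrix ι ι K :=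
  pairMatrix σ (pairMean σ l) (pairDev σ l)

/-- Eigenvectors of `pairCore σ l` as columns: on a pair with distinct entries, `(1, 1)` for the
larger entry and `(1, -1)` for the smaller one, up to sign; unit vectors elsewhere. -/
def pairEigenvectors [DecidableEq ι] (σ : ι → ι) (l : ι → K) : Matrix ι ι K :=
  pairMatrix σ (fun i => if l (σ i) ≤ l i then 1 else -1) fun i => if l i = l (σ i) then 0 else 1

/-- Half of what the row sum `max (l i) (l (σ i))` of `pairCore σ l` lacks to reach `l o`; the
correction is split evenly between the columns `o` and `σ o`. -/
def rowDeficit (σ : ι → ι) (l : ι → K) (o i : ι) : K :=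
  (l o - max (l i) (l (σ i))) / 2

/-- The matrix `pairCore σ l` corrected in the columns `o` and `σ o` so that all row sums become
`l o`. -/
def levelCore [DecidableEq ι] (σ : ι → ι) (l : ι → K) (o : ι) : Matrix ι ι K :=
  pairCore σ l + vecMulVec (rowDeficit σ l o) (pairIndicator K σ o)

/-- The matrix realizing `l` when `μ` is the mean of `l`: a multiple of the all-ones vector is
added to each column of `levelCore σ l o`, which replaces the means on the diagonal by `μ`. -/
def salzmannMatrix [DecidableEq ι] (σ : ι → ι) (l : ι → K) (o : ι) (μ : K) : Matrix ι ι K :=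
  levelCore σ l o + vecMulVec 1 fun j => μ - pairMean σ l j

variable {l} {o : ι}

lemma pairDev_apply_involutive (hσ : σ.Involutive) (i : ι) :
    pairDev σ l (σ i) = pairDev σ l i := by
  rw [pairDev, pairDev, hσ i, abs_sub_comm]

lemma pairCore_transpose [DecidableEq ι] (hσ : σ.Involutive) : (pairCore σ l)ᵀ = pairCore σ l := by
  rw [pairCore, transpose_pairMatrix hσ]
  congr 1
  exact funext (pairDev_apply_involutive hσ)

lemma rowDeficit_self (hmax : ∀ i, l i ≤ l o) : rowDeficit σ l o o = 0 := by
  rw [rowDeficit, max_eq_left (hmax _), sub_self, zero_div]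

lemma rowDeficit_apply_involutive (hσ : σ.Involutive) (i : ι) :
    rowDeficit σ l o (σ i) = rowDeficit σ l o i := by
  rw [rowDeficit, rowDeficit, hσ i, max_comm]

lemma salzmannMatrix_apply [DecidableEq ι] (μ : K) (i j : ι) :
    salzmannMatrix σ l o μ i j = (if i = j then pairMean σ l i else 0) +
      (if j = σ i then pairDev σ l i else 0) +
      rowDeficit σ l o i * pairIndicator K σ o j + (μ - pairMean σ l j) := by
  simp [salzmannMatrix, levelCore, pairCore, pairMatrix, vecMulVec_apply, diagonal_apply]

variable [IsStrictOrderedRing K]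

lemma pairDev_nonneg (i : ι) : 0 ≤ pairDev σ l i :=
  div_nonneg (abs_nonneg _) zero_le_two

lemma rowDeficit_nonneg (hmax : ∀ i, l i ≤ l o) (i : ι) : 0 ≤ rowDeficit σ l o i :=
  div_nonneg (sub_nonneg.2 (max_le (hmax _) (hmax _))) zero_le_two

lemma pairMean_add_pairDev (i : ι) : pairMean σ l i + pairDev σ l i = max (l i) (l (σ i)) := by
  rcases le_total (l i) (l (σ i)) with h | h
  · rw [pairMean, pairDev, abs_of_nonpos (sub_nonpos.2 h), max_eq_right h]; ring
  · rw [pairMean, pairDev, abs_of_nonneg (sub_nonneg.2 h), max_eq_left h]; ring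

lemma pairMean_sub_pairDev (i : ι) : pairMean σ l i - pairDev σ l i = min (l i) (l (σ i)) := by
  have h := min_add_max (l i) (l (σ i))
  rw [← pairMean_add_pairDev] at h
  rw [eq_sub_of_add_eq h, pairMean]; ring

lemma pairMean_le_add_pairDev {i : ι} (hi : i = o ∨ i = σ o) :
    pairMean σ l i ≤ l (σ o) + pairDev σ l i := by
  rw [← sub_le_iff_le_add, pairMean_sub_pairDev]
  rcases hi with rfl | rfl
  exacts [min_le_right _ _, min_le_left _ _]

lemma pairMean_sub_rowDeficit_le (hmin : ∀ i, l (σ o) ≤ l i) (i : ι) :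
    pairMean σ l o - rowDeficit σ l o i ≤ pairMean σ l i := by
  have hmax := pairMean_add_pairDev (σ := σ) (l := l) i
  have hle : l (σ o) ≤ pairMean σ l i - pairDev σ l i := by
    rw [pairMean_sub_pairDev]
    exact le_min (hmin _) (hmin _)
  rw [rowDeficit, ← hmax, pairMean]
  linarith

variable [DecidableEq ι]

lemma pairIndicator_nonneg (i : ι) : 0 ≤ pairIndicator K σ o i := by
  simp only [pairIndicator, Pi.add_apply, Pi.single_apply]
  positivity

lemma one_le_pairIndicator {i : ι} (hi : i = o ∨ i = σ o) : 1 ≤ pairIndicator K σ o i := by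
  simp only [pairIndicator, Pi.add_apply]
  rcases hi with rfl | rfl <;> rw [Pi.single_eq_same, Pi.single_apply]
  · exact le_add_of_nonneg_right (by positivity)
  · exact le_add_of_nonneg_left (by positivity)

section Spectrum

variable [Fintype ι]

lemma isUnit_pairEigenvectors (hσ : σ.Involutive) : IsUnit (pairEigenvectors σ l) := by
  set d : ι → K := fun i => if l i = l (σ i) then 1 else 2 with hd
  have square : pairEigenvectors σ l * pairEigenvectors σ l = diagonal d := by
    rw [pairEigenvectors, pairMatrix_mul hσ, ← pairMatrix_zero_right (σ := σ)]
    congr 1 <;> ext i <;> rcases lt_trichotomy (l i) (l (σ i)) with h | h | h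
    all_goals simp [hd, hσ i, h, not_le_of_gt, le_of_lt, ne_of_lt, ne_of_gt, one_add_one_eq_two]
  rw [← isUnit_mul_self_iff, square, isUnit_diagonal, Pi.isUnit_iff]
  intro i
  simp only [hd, isUnit_iff_ne_zero]
  split_ifs <;> simp

lemma pairCore_mul_pairEigenvectors (hσ : σ.Involutive) :
    pairCore σ l * pairEigenvectors σ l = pairEigenvectors σ l * diagonal l := by
  rw [pairCore, pairEigenvectors, ← pairMatrix_zero_right (σ := σ), pairMatrix_mul hσ,
    pairMatrix_mul hσ]
  congr 1 <;> ext i <;> rcases lt_trichotomy (l i) (l (σ i)) with h | h | h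
  all_goals
    simp [pairMean, pairDev, hσ i, h, not_le_of_gt, le_of_lt, ne_of_lt, ne_of_gt, abs_of_pos,
      abs_of_neg] <;> ring

lemma charpoly_pairCore (hσ : σ.Involutive) : (pairCore σ l).charpoly = ∏ i, (X - C (l i)) := by
  rw [charpoly_eq_of_mul_eq_mul (isUnit_pairEigenvectors hσ) (pairCore_mul_pairEigenvectors hσ),
    charpoly_diagonal]

lemma pairCore_mulVec_apply_of_invariant {v : ι → K} (hv : ∀ i, v (σ i) = v i) (i : ι) :
    (pairCore σ l *ᵥ v) i = max (l i) (l (σ i)) * v i := by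
  rw [pairCore, pairMatrix_mulVec, hv, ← add_mul, pairMean_add_pairDev]

lemma pairIndicator_vecMul_pairCore (hσ : σ.Involutive) (hmax : ∀ i, l i ≤ l o) :
    pairIndicator K σ o ᵥ* pairCore σ l = l o • pairIndicator K σ o := by
  rw [← mulVec_transpose, pairCore_transpose hσ]
  ext i
  rw [pairCore_mulVec_apply_of_invariant (pairIndicator_apply_involutive hσ o), Pi.smul_apply,
    smul_eq_mul]
  by_cases hi : i = o ∨ i = σ o
  · congr 1
    rcases hi with rfl | rfl
    · exact max_eq_left (hmax _)
    · rw [hσ]; exact max_eq_right (hmax _)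
  · push Not at hi
    rw [pairIndicator_of_ne hi.1 hi.2, mul_zero, mul_zero]

lemma charpoly_levelCore (hσ : σ.Involutive) (hmax : ∀ i, l i ≤ l o) :
    (levelCore σ l o).charpoly = ∏ i, (X - C (l i)) := by
  have orthogonal : rowDeficit σ l o ⬝ᵥ pairIndicator K σ o = 0 := by
    rw [dotProduct_pairIndicator, rowDeficit_apply_involutive hσ, rowDeficit_self hmax, add_zero]
  rw [levelCore, charpoly_add_vecMulVec_of_vecMul_eq_smul
    (pairIndicator_vecMul_pairCore hσ hmax) orthogonal, charpoly_pairCore hσ]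

lemma levelCore_mulVec_one : levelCore σ l o *ᵥ 1 = l o • 1 := by
  ext i
  rw [levelCore, add_mulVec, Pi.add_apply,
    pairCore_mulVec_apply_of_invariant (σ := σ) (v := 1) fun _ => rfl, vecMulVec_mulVec,
    dotProduct_comm, dotProduct_pairIndicator]
  simp only [rowDeficit, Pi.one_apply, Pi.smul_apply, MulOpposite.smul_eq_mul_unop,
    MulOpposite.unop_op, smul_eq_mul]
  ring

lemma charpoly_salzmannMatrix (hσ : σ.Involutive) (hmax : ∀ i, l i ≤ l o) {μ : K}
    (hμ : Fintype.card ι * μ = ∑ i, l i) :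
    (salzmannMatrix σ l o μ).charpoly = ∏ i, (X - C (l i)) := by
  have orthogonal : (1 : ι → K) ⬝ᵥ (fun j => μ - pairMean σ l j) = 0 := by
    rw [one_dotProduct, sum_sub_pairMean l hσ, hμ, sub_self]
  rw [salzmannMatrix, charpoly_add_vecMulVec_of_mulVec_eq_smul levelCore_mulVec_one orthogonal,
    charpoly_levelCore hσ hmax]

end Spectrum

theorem salzmannMatrix_nonneg (hσ : σ.Involutive) (hmax : ∀ i, l i ≤ l o)
    (hmin : ∀ i, l (σ o) ≤ l i) {μ : K} (hμ : 0 ≤ μ) (hμmin : l (σ o) ≤ μ)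
    (hμmean : ∀ i, i ≠ o → i ≠ σ o → pairMean σ l i ≤ μ) (i j : ι) :
    0 ≤ salzmannMatrix σ l o μ i j := by
  have hdev : 0 ≤ if j = σ i then pairDev σ l i else 0 := by
    split_ifs
    exacts [pairDev_nonneg i, le_rfl]
  have hdeficit := mul_nonneg (rowDeficit_nonneg (σ := σ) hmax i)
    (pairIndicator_nonneg (σ := σ) (o := o) j)
  rw [salzmannMatrix_apply]
  rcases eq_or_ne i j with rfl | hij
  · rw [if_pos rfl]
    linarith
  rw [if_neg hij]
  by_cases hj : j = o ∨ j = σ o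
  · have hmean : pairMean σ l j = pairMean σ l o := by
      rcases hj with rfl | rfl
      exacts [rfl, pairMean_apply_involutive l hσ o]
    by_cases hi : i = o ∨ i = σ o
    · have hji : j = σ i := by
        rcases hi with rfl | rfl <;> rcases hj with rfl | rfl
        exacts [absurd rfl hij, rfl, (hσ _).symm, absurd rfl hij]
      have hle : pairMean σ l i ≤ l (σ o) + pairDev σ l i := pairMean_le_add_pairDev hi
      rw [if_pos hji, hji, pairMean_apply_involutive l hσ, ← hji]
      linarith
    · push Not at hi
      have hle := pairMean_sub_rowDeficit_le hmin i
      have hμi := hμmean i hi.1 hi.2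
      have := le_mul_of_one_le_right (rowDeficit_nonneg (σ := σ) hmax i) (one_le_pairIndicator hj)
      linarith
  · push Not at hj
    have := hμmean j hj.1 hj.2
    linarith

end Pairs

theorem salzmann_general {ι K : Type*} [Fintype ι] [DecidableEq ι] [Field K] [LinearOrder K]
    [IsStrictOrderedRing K] {σ : ι → ι} (hσ : σ.Involutive) {l : ι → K} {o : ι}
    (hmax : ∀ i, l i ≤ l o) (hmin : ∀ i, l (σ o) ≤ l i) (hsum : 0 ≤ ∑ i, l i)
    (hpair : ∀ i, i ≠ o → i ≠ σ o →
      l i + l (σ i) ≤ 2 / (Fintype.card ι : K) * ∑ j, l j) :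
    ∃ A : Matrix ι ι K, (∀ i j, 0 ≤ A i j) ∧ A.charpoly = ∏ i, (X - C (l i)) := by
  have hcard : (0 : K) < Fintype.card ι := Nat.cast_pos.2 (Fintype.card_pos_iff.2 ⟨o⟩)
  set μ : K := (∑ i, l i) / Fintype.card ι with hμ
  have hμsum : Fintype.card ι * μ = ∑ i, l i := mul_div_cancel₀ _ hcard.ne'
  have hμmin : l (σ o) ≤ μ := by
    rw [hμ, le_div_iff₀' hcard, ← nsmul_eq_mul]
    exact card_nsmul_le_sum univ l _ fun i _ => hmin i
  have hμmean : ∀ i, i ≠ o → i ≠ σ o → pairMean σ l i ≤ μ := fun i hi hi' => by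
    have := hpair i hi hi'
    rw [div_mul_eq_mul_div, mul_div_assoc, ← hμ] at this
    rw [pairMean]
    linarith
  exact ⟨salzmannMatrix σ l o μ,
    salzmannMatrix_nonneg hσ hmax hmin (div_nonneg hsum hcard.le) hμmin hμmean,
    charpoly_salzmannMatrix hσ hmax hμsum⟩

lemma add_rev_le_of_forall_le_half {M : Type*} [AddCommMagma M] [LE M] {n : ℕ} {l : Fin n → M}
    {c : M} (h : ∀ i : Fin n, (i : ℕ) ≠ 0 → (i : ℕ) + 1 ≤ (n + 1) / 2 → l i + l i.rev ≤ c)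
    (i : Fin n) (hfirst : (i : ℕ) ≠ 0) (hlast : (i : ℕ) + 1 ≠ n) : l i + l i.rev ≤ c := by
  by_cases hi : (i : ℕ) + 1 ≤ (n + 1) / 2
  · exact h i hfirst hi
  · have hrev := h i.rev (by rw [Fin.val_rev]; omega) (by rw [Fin.val_rev]; omega)
    rwa [Fin.rev_rev, add_comm] at hrev

/-- **Salzmann's theorem.** If `λ_1 ≥ ⋯ ≥ λ_n`, `∑ λ_k ≥ 0`, and
`λ_k + λ_{n-k+1} ≤ (2/n) ∑ λ_j` for `k = 2, …, ⌊(n+1)/2⌋`, then `(λ_1, …, λ_n)` is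
realizable.  (Indices here are zero-based: `λ_k = l ⟨k-1⟩`.) -/
theorem salzmann (n : ℕ) (l : Fin n → ℝ) (hanti : Antitone l)
    (hsum : 0 ≤ ∑ i, l i)
    (hcond : ∀ (k : ℕ) (hk2 : 2 ≤ k) (hk : k ≤ (n + 1) / 2),
      l ⟨k - 1, by omega⟩ + l ⟨n - k, by omega⟩ ≤ (2 / (n : ℝ)) * ∑ j, l j) :
    RealRealizable l := by
  cases n with
  | zero => exact ⟨0, nofun, by simp [charpoly]⟩
  | succ N =>
    refine salzmann_general Fin.rev_involutive (fun i => hanti i.zero_le)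
      (fun i => hanti (i.le_last.trans_eq (Fin.rev_zero N).symm)) hsum fun i hfirst hlast => ?_
    rw [Fintype.card_fin]
    rw [Fin.rev_zero] at hlast
    exact add_rev_le_of_forall_le_half (fun k hk hhalf => hcond (k + 1) (by omega) hhalf) i
      (Fin.val_ne_zero_iff.2 hfirst) fun h => hlast (Fin.ext (Nat.succ_injective h))
end

section
/- (Complex Suleimanova theorem) Let Λ = (λ_1, λ_2, …, λ_n) be a list of complex numbers that is closed under complex conjugation, with λ_1 real, and such that for every i ≥ 2 one has Re(λ_i) ≤ 0 and |Re(λ_i)| ≥ |Im(λ_i)|. Then Λ is realizable if and only if ∑_{i=1}^n λ_i ≥ 0 (this sum is real since Λ is closed under conjugation). -/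
open Polynomial Matrix Finset

/-- A list of complex numbers is realizable if it is the spectrum (counted with
algebraic multiplicity) of an entrywise nonnegative real matrix. -/
def Realizable {n : ℕ} (l : Fin n → ℂ) : Prop :=
  ∃ A : Matrix (Fin n) (Fin n) ℝ, (∀ i j, 0 ≤ A i j) ∧
    (A.map (Complex.ofReal)).charpoly = ∏ i, (X - C (l i))

/-!
The characteristic polynomial of a companion matrix with last column `-c₀, …, -cₙ₋₁` is
`Xⁿ + cₙ₋₁ Xⁿ⁻¹ + ⋯ + c₀`, so it suffices that `∏ (X - λᵢ)` has nonpositive coefficients below the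
leading one. Split off the exceptional root: if `q = ∏_{i ≥ 2} (X - λᵢ)` and `r = λ₁`, then
`(X - r) q` has this property as soon as `0 ≤ qₖ ≤ r qₖ₊₁` below the leading coefficient. Such
ratio bounds add up under multiplication. A real factor `X + a` of `q` has ratio bound `a ≥ 0`; a
real quadratic factor `X² + a X + c` has ratio bound `a ≥ 0` if `0 ≤ c ≤ a²`, which for the roots
`z` and `conj z` reads `|z|² ≤ (2 Re z)²`, that is `|Im z| ≤ √3 |Re z|`. Hence `q` has ratio bound
`-∑_{i ≥ 2} λᵢ`, which is at most `r` exactly when `∑ λᵢ ≥ 0`. If `λ₁` were not real, its conjugate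
would be among the other `λᵢ`, whence `Re λ₁ < 0` and `∑ λᵢ < 0`.
-/

section CoeffRatio

/-- `f` has nonnegative coefficients, and each coefficient below the leading one is at most `s`
times the next. The leading coefficient itself is exempt, as its successor vanishes; `0 ≤ s` is
imposed because constant polynomials do not force it. -/
structure CoeffRatioLE {R : Type*} [Semiring R] [PartialOrder R] (f : R[X]) (s : R) : Prop where
  bound_nonneg : 0 ≤ s
  coeff_nonneg (k : ℕ) : 0 ≤ f.coeff k
  coeff_le (k : ℕ) (hk : k < f.natDegree) : f.coeff k ≤ s * f.coeff (k + 1)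

section Semiring

variable {R : Type*} [CommSemiring R] [PartialOrder R] [IsOrderedRing R]

lemma CoeffRatioLE.one : CoeffRatioLE (1 : R[X]) 0 where
  bound_nonneg := le_rfl
  coeff_nonneg k := by
    rw [coeff_one]
    split_ifs
    exacts [zero_le_one, le_rfl]
  coeff_le k hk := absurd hk (by simp)

lemma coeffRatioLE_X_add_C {a : R} (ha : 0 ≤ a) : CoeffRatioLE (X + C a) a where
  bound_nonneg := ha
  coeff_nonneg k := by
    rcases k with _ | _ | k <;> simp [coeff_X, coeff_C, ha]
  coeff_le k hk := by
    obtain rfl : k = 0 := by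
      have : (X + C a).natDegree ≤ 1 := by compute_degree
      omega
    simp

lemma coeffRatioLE_quadratic {a c : R} (ha : 0 ≤ a) (hc : 0 ≤ c) (hca : c ≤ a * a) :
    CoeffRatioLE (X ^ 2 + C a * X + C c) a where
  bound_nonneg := ha
  coeff_nonneg k := by
    rcases k with _ | _ | _ | k <;> simp [coeff_X_pow, coeff_X, coeff_C, ha, hc]
  coeff_le k hk := by
    have hdeg : (X ^ 2 + C a * X + C c).natDegree ≤ 2 := by compute_degree
    obtain rfl | rfl : k = 0 ∨ k = 1 := by omega
    · simpa [coeff_X, coeff_C, coeff_X_pow] using hca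
    · simp [coeff_C, coeff_X_pow]

lemma sum_coeff_succ_mul_coeff_le_coeff_mul {f g : R[X]} (hf : ∀ k, 0 ≤ f.coeff k)
    (hg : ∀ k, 0 ≤ g.coeff k) (k : ℕ) :
    ∑ x ∈ antidiagonal k, f.coeff (x.1 + 1) * g.coeff x.2 ≤ (f * g).coeff (k + 1) := by
  rw [coeff_mul, Finset.Nat.sum_antidiagonal_succ]
  exact le_add_of_nonneg_left (mul_nonneg (hf 0) (hg (k + 1)))

lemma sum_coeff_mul_coeff_succ_le_coeff_mul {f g : R[X]} (hf : ∀ k, 0 ≤ f.coeff k)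
    (hg : ∀ k, 0 ≤ g.coeff k) (k : ℕ) :
    ∑ x ∈ antidiagonal k, f.coeff x.1 * g.coeff (x.2 + 1) ≤ (f * g).coeff (k + 1) := by
  rw [coeff_mul, Finset.Nat.sum_antidiagonal_succ']
  exact le_add_of_nonneg_left (mul_nonneg (hf (k + 1)) (hg 0))

lemma CoeffRatioLE.mul {f g : R[X]} {s t : R} (hf : CoeffRatioLE f s) (hg : CoeffRatioLE g t) :
    CoeffRatioLE (f * g) (s + t) where
  bound_nonneg := add_nonneg hf.bound_nonneg hg.bound_nonneg
  coeff_nonneg k := by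
    rw [coeff_mul]
    exact sum_nonneg fun x _ ↦ mul_nonneg (hf.coeff_nonneg _) (hg.coeff_nonneg _)
  coeff_le k hk := by
    have hf₀ := hf.coeff_nonneg
    have hg₀ := hg.coeff_nonneg
    have hs := hf.bound_nonneg
    have ht := hg.bound_nonneg
    have termwise : ∀ x ∈ antidiagonal k, f.coeff x.1 * g.coeff x.2 ≤
        s * (f.coeff (x.1 + 1) * g.coeff x.2) + t * (f.coeff x.1 * g.coeff (x.2 + 1)) := by
      rintro ⟨i, j⟩ hij
      have hlt : i < f.natDegree ∨ j < g.natDegree := by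
        have := mem_antidiagonal.1 hij
        have := natDegree_mul_le (p := f) (q := g)
        omega
      rcases hlt with hi | hj
      · refine le_add_of_le_of_nonneg ?_ (mul_nonneg ht (mul_nonneg (hf₀ _) (hg₀ _)))
        rw [← mul_assoc]
        exact mul_le_mul_of_nonneg_right (hf.coeff_le i hi) (hg₀ j)
      · refine le_add_of_nonneg_of_le (mul_nonneg hs (mul_nonneg (hf₀ _) (hg₀ _))) ?_
        rw [mul_left_comm]
        exact mul_le_mul_of_nonneg_left (hg.coeff_le j hj) (hf₀ i)
    calc (f * g).coeff k
        = ∑ x ∈ antidiagonal k, f.coeff x.1 * g.coeff x.2 := coeff_mul f g k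
      _ ≤ s * ∑ x ∈ antidiagonal k, f.coeff (x.1 + 1) * g.coeff x.2 +
            t * ∑ x ∈ antidiagonal k, f.coeff x.1 * g.coeff (x.2 + 1) := by
          rw [mul_sum, mul_sum, ← sum_add_distrib]
          exact sum_le_sum termwise
      _ ≤ s * (f * g).coeff (k + 1) + t * (f * g).coeff (k + 1) := by
          gcongr
          · exact sum_coeff_succ_mul_coeff_le_coeff_mul hf₀ hg₀ k
          · exact sum_coeff_mul_coeff_succ_le_coeff_mul hf₀ hg₀ k
      _ = (s + t) * (f * g).coeff (k + 1) := (add_mul _ _ _).symm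

lemma coeffRatioLE_nextCoeff_multiset_prod {F : Multiset R[X]} (hmonic : ∀ f ∈ F, f.Monic)
    (hF : ∀ f ∈ F, CoeffRatioLE f f.nextCoeff) : CoeffRatioLE F.prod F.prod.nextCoeff := by
  refine (Multiset.prod_induction (fun f ↦ f.Monic ∧ CoeffRatioLE f f.nextCoeff) F ?_ ?_
    fun f hf ↦ ⟨hmonic f hf, hF f hf⟩).2
  · rintro f g ⟨hf, hfr⟩ ⟨hg, hgr⟩
    exact ⟨hf.mul hg, hf.nextCoeff_mul hg ▸ hfr.mul hgr⟩
  · exact ⟨monic_one, by simpa [nextCoeff] using CoeffRatioLE.one (R := R)⟩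

end Semiring

lemma CoeffRatioLE.coeff_X_sub_C_mul_nonpos {R : Type*} [CommRing R] [PartialOrder R]
    [IsOrderedRing R] {f : R[X]} {s r : R} (hf : CoeffRatioLE f s) (hsr : s ≤ r) {k : ℕ}
    (hk : k ≤ f.natDegree) : ((X - C r) * f).coeff k ≤ 0 := by
  rcases k with _ | k
  · simpa [sub_mul] using mul_nonneg (hf.bound_nonneg.trans hsr) (hf.coeff_nonneg 0)
  · rw [sub_mul, coeff_sub, coeff_X_mul, coeff_C_mul, sub_nonpos]
    exact (hf.coeff_le k hk).trans
      (mul_le_mul_of_nonneg_right hsr (hf.coeff_nonneg _))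

end CoeffRatio

section LeftSector

/-- The closed sector of half-angle `π / 3` about the negative real axis. -/
def leftSector : Set ℂ :=
  {z | z.re ≤ 0 ∧ |z.im| ≤ √3 * |z.re|}

lemma norm_sq_le_of_mem_leftSector {z : ℂ} (hz : z ∈ leftSector) :
    ‖z‖ ^ 2 ≤ (2 * z.re) * (2 * z.re) := by
  have him : z.im ^ 2 ≤ 3 * z.re ^ 2 := by
    have := pow_le_pow_left₀ (abs_nonneg _) hz.2 2
    rwa [mul_pow, sq_abs, sq_abs, Real.sq_sqrt (by norm_num)] at this
  rw [Complex.sq_norm, Complex.normSq_apply]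
  linarith

lemma re_neg_of_mem_leftSector {z : ℂ} (hz : z ∈ leftSector) (him : z.im ≠ 0) : z.re < 0 := by
  refine hz.1.lt_of_ne fun hre ↦ him ?_
  simpa [hre] using hz.2

lemma multiset_sum_re_nonpos {t : Multiset ℂ} (ht : ∀ z ∈ t, z.re ≤ 0) : t.sum.re ≤ 0 :=
  Multiset.sum_induction (fun z : ℂ ↦ z.re ≤ 0) t
    (fun z w hz hw ↦ by simpa using add_nonpos hz hw) le_rfl ht

lemma im_eq_zero_of_cons_sum_re_nonneg {a : ℂ} {t : Multiset ℂ}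
    (hconj : (a ::ₘ t).map (starRingEnd ℂ) = a ::ₘ t) (ht : ∀ z ∈ t, z ∈ leftSector)
    (hsum : 0 ≤ (a ::ₘ t).sum.re) : a.im = 0 := by
  by_contra him
  have hmem : (starRingEnd ℂ) a ∈ t := by
    have : (starRingEnd ℂ) a ∈ a ::ₘ t :=
      hconj ▸ Multiset.mem_map_of_mem _ (Multiset.mem_cons_self a t)
    exact (Multiset.mem_cons.1 this).resolve_left fun h ↦ him (Complex.conj_eq_iff_im.1 h)
  have hre : a.re < 0 := by
    simpa using re_neg_of_mem_leftSector (ht _ hmem) (by simpa using him)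
  rw [Multiset.sum_cons, Complex.add_re] at hsum
  linarith [multiset_sum_re_nonpos fun z hz ↦ (ht z hz).1]

end LeftSector

section RealPolynomial

lemma exists_monic_map_ofReal_eq_prod {t : Multiset ℂ} (ht : t.map (starRingEnd ℂ) = t) :
    ∃ q : ℝ[X], q.Monic ∧ q.map Complex.ofRealHom = (t.map fun z ↦ X - C z).prod := by
  have hfixed : (t.map fun z ↦ X - C z).prod.map (starRingEnd ℂ) =
      (t.map fun z ↦ X - C z).prod := by
    conv_rhs => rw [← ht]
    simp [Polynomial.map_multiset_prod]
  have hlifts : (t.map fun z ↦ X - C z).prod ∈ lifts Complex.ofRealHom := by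
    refine (lifts_iff_coeff_lifts _).2 fun k ↦ Complex.conj_eq_iff_real.1 ?_ |>.imp fun _ h ↦ h.symm
    rw [← coeff_map, hfixed]
  obtain ⟨q, hq, -, hmonic⟩ := lifts_and_natDegree_eq_and_monic hlifts
    (monic_multiset_prod_of_monic _ _ fun z _ ↦ monic_X_sub_C z)
  exact ⟨q, hmonic, hq⟩

lemma eq_of_monic_of_dvd_of_irreducible {R : Type*} [CommRing R] {f g : R[X]}
    (hf : f.Monic) (hirr : Irreducible f) (hg : g.Monic) (hg1 : g ≠ 1) (hgf : g ∣ f) : f = g :=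
  eq_of_monic_of_associated hf hg <|
    (hirr.dvd_iff.1 hgf).resolve_left fun hunit ↦ hg1 (hg.eq_one_of_isUnit hunit)

lemma natDegree_X_sq_add_C_mul_X_add_C {R : Type*} [Semiring R] [Nontrivial R] (a c : R) :
    (X ^ 2 + C a * X + C c).natDegree = 2 := by
  compute_degree!

lemma nextCoeff_X_sq_add_C_mul_X_add_C {R : Type*} [Semiring R] [Nontrivial R] (a c : R) :
    (X ^ 2 + C a * X + C c).nextCoeff = a := by
  have hdeg := natDegree_X_sq_add_C_mul_X_add_C a c
  rw [nextCoeff_of_natDegree_pos (by omega), hdeg]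
  simp [coeff_X_pow, coeff_C]

lemma coeffRatioLE_nextCoeff_of_irreducible {f : ℝ[X]} (hf : f.Monic) (hirr : Irreducible f)
    (hroots : ∀ z : ℂ, aeval z f = 0 → z ∈ leftSector) : CoeffRatioLE f f.nextCoeff := by
  obtain ⟨z, hz⟩ := IsAlgClosed.exists_aeval_eq_zero ℂ f (degree_pos_of_irreducible hirr).ne'
  have hsector := hroots z hz
  by_cases him : z.im = 0
  · have hdvd : X + C (-z.re) ∣ f := by
      have hzre : algebraMap ℝ ℂ z.re = z := Complex.ext rfl him.symm
      rw [← hzre, aeval_algebraMap_eq_zero_iff] at hz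
      simpa [sub_eq_add_neg] using dvd_iff_isRoot.2 hz
    obtain rfl := eq_of_monic_of_dvd_of_irreducible hf hirr (monic_X_add_C _)
      (X_add_C_ne_one _) hdvd
    rw [nextCoeff_X_add_C]
    exact coeffRatioLE_X_add_C (neg_nonneg.2 hsector.1)
  · have hdvd : X ^ 2 + C (-(2 * z.re)) * X + C (‖z‖ ^ 2) ∣ f := by
      simpa [sub_eq_add_neg] using quadratic_dvd_of_aeval_eq_zero_im_ne_zero f hz him
    have hne : X ^ 2 + C (-(2 * z.re)) * X + C (‖z‖ ^ 2) ≠ 1 := by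
      refine ne_of_apply_ne natDegree ?_
      rw [natDegree_X_sq_add_C_mul_X_add_C, natDegree_one]
      exact two_ne_zero
    obtain rfl := eq_of_monic_of_dvd_of_irreducible hf hirr (by monicity!) hne hdvd
    rw [nextCoeff_X_sq_add_C_mul_X_add_C]
    refine coeffRatioLE_quadratic (by linarith [hsector.1]) (sq_nonneg _) ?_
    simpa only [neg_mul_neg] using norm_sq_le_of_mem_leftSector hsector

open UniqueFactorizationMonoid in
lemma coeffRatioLE_nextCoeff_of_roots_mem_leftSector {q : ℝ[X]} (hq : q.Monic)
    (hroots : ∀ z : ℂ, aeval z q = 0 → z ∈ leftSector) : CoeffRatioLE q q.nextCoeff := by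
  have hprod : (normalizedFactors q).prod = q :=
    (prod_normalizedFactors_eq hq.ne_zero).trans hq.normalize_eq_self
  have hfactors {f : ℝ[X]} (hf : f ∈ normalizedFactors q) :=
    (Polynomial.mem_normalizedFactors_iff hq.ne_zero).1 hf
  rw [← hprod]
  refine coeffRatioLE_nextCoeff_multiset_prod (fun f hf ↦ (hfactors hf).2.1) fun f hf ↦ ?_
  obtain ⟨hirr, hmonic, hdvd⟩ := hfactors hf
  exact coeffRatioLE_nextCoeff_of_irreducible hmonic hirr fun z hz ↦
    hroots z (aeval_eq_zero_of_dvd_aeval_eq_zero hdvd hz)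

theorem exists_map_ofReal_eq_prod_coeff_nonpos {a : ℂ} {t : Multiset ℂ} (ha : a.im = 0)
    (hconj : t.map (starRingEnd ℂ) = t) (ht : ∀ z ∈ t, z ∈ leftSector)
    (hsum : 0 ≤ (a ::ₘ t).sum.re) :
    ∃ p : ℝ[X], p.map Complex.ofRealHom = ((a ::ₘ t).map fun z ↦ X - C z).prod ∧
      ∀ k < p.natDegree, p.coeff k ≤ 0 := by
  obtain ⟨q, hq, hmap⟩ := exists_monic_map_ofReal_eq_prod hconj
  have hroots (z : ℂ) (hz : aeval z q = 0) : z ∈ leftSector := by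
    have hz' : eval z (t.map fun z ↦ X - C z).prod = 0 := by
      rw [← hmap, eval_map]
      exact hz
    have hne := (monic_multiset_prod_of_monic t _ fun z _ ↦ monic_X_sub_C z).ne_zero
    exact ht z (roots_multiset_prod_X_sub_C t ▸ (mem_roots hne).2 hz')
  have hnext : q.nextCoeff = -t.sum.re := by
    have := congrArg nextCoeff hmap
    rw [nextCoeff_map_eq, multiset_prod_X_sub_C_nextCoeff] at this
    simpa using congrArg Complex.re this
  have hle : q.nextCoeff ≤ a.re := by
    rw [Multiset.sum_cons, Complex.add_re] at hsum
    linarith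
  refine ⟨(X - C a.re) * q, ?_, fun k hk ↦ ?_⟩
  · have hare : (a.re : ℂ) = a := Complex.ext rfl ha.symm
    simp [hmap, hare]
  · rw [(monic_X_sub_C _).natDegree_mul hq, natDegree_X_sub_C] at hk
    exact (coeffRatioLE_nextCoeff_of_roots_mem_leftSector hq hroots).coeff_X_sub_C_mul_nonpos hle
      (by omega)

end RealPolynomial

section Realizability

lemma exists_nonneg_matrix_charpoly_eq {K : Type*} [Field K] [PartialOrder K] [IsOrderedRing K]
    {p : K[X]} (hp : p.Monic) (hcoeff : ∀ k < p.natDegree, p.coeff k ≤ 0) :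
    ∃ A : Matrix (Fin p.natDegree) (Fin p.natDegree) K, (∀ i j, 0 ≤ A i j) ∧ A.charpoly = p := by
  set pb := AdjoinRoot.powerBasis hp.ne_zero with hpb
  have hmin : minpoly K pb.gen = p := AdjoinRoot.minpoly_powerBasis_gen_of_monic hp
  have hdim : pb.dim = p.natDegree := AdjoinRoot.powerBasis_dim hp.ne_zero
  rw [← hdim] at hcoeff ⊢
  refine ⟨Algebra.leftMulMatrix pb.basis pb.gen, fun i j ↦ ?_, ?_⟩
  · rw [PowerBasis.leftMulMatrix, PowerBasis.minpolyGen_eq, hmin, Matrix.of_apply]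
    split_ifs
    exacts [neg_nonneg.2 (hcoeff i i.2), zero_le_one, le_rfl]
  · rw [charpoly_leftMulMatrix, hmin]

lemma realizable_of_coeff_nonpos {n : ℕ} {l : Fin n → ℂ} {p : ℝ[X]}
    (hmap : p.map Complex.ofRealHom = ∏ i, (X - C (l i)))
    (hcoeff : ∀ k < p.natDegree, p.coeff k ≤ 0) : Realizable l := by
  have hp : p.Monic := monic_map_iff.1 (hmap ▸ monic_prod_of_monic _ _ fun i _ ↦ monic_X_sub_C _)
  obtain rfl : p.natDegree = n := by
    rw [← natDegree_map Complex.ofRealHom, hmap]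
    simp [natDegree_prod_of_monic _ _ fun i _ ↦ monic_X_sub_C (l i)]
  obtain ⟨A, hA, hchar⟩ := exists_nonneg_matrix_charpoly_eq hp hcoeff
  exact ⟨A, hA, (A.charpoly_map Complex.ofRealHom).trans (hchar.symm ▸ hmap)⟩

lemma Realizable.sum_re_nonneg {n : ℕ} {l : Fin n → ℂ} (hl : Realizable l) :
    0 ≤ (∑ i, l i).re := by
  obtain ⟨A, hA, hchar⟩ := hl
  have htrace : (A.map Complex.ofReal).trace = ∑ i, l i := by
    rw [trace_eq_neg_charpoly_nextCoeff, hchar, prod_X_sub_C_nextCoeff, neg_neg]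
  rw [← htrace, Matrix.trace, Complex.re_sum]
  exact sum_nonneg fun i _ ↦ hA i i

end Realizability

theorem complex_suleimanova_general {n : ℕ} {l : Fin n → ℂ} (i₀ : Fin n)
    (hconj : Multiset.map (starRingEnd ℂ) (Finset.univ.val.map l) = Finset.univ.val.map l)
    (hsector : ∀ i ≠ i₀, l i ∈ leftSector) :
    Realizable l ↔ 0 ≤ (∑ i, l i).re := by
  refine ⟨Realizable.sum_re_nonneg, fun hsum ↦ ?_⟩
  set t : Multiset ℂ := (univ.erase i₀).val.map l with ht_def
  have hcons : univ.val.map l = l i₀ ::ₘ t := by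
    rw [ht_def, ← Multiset.map_cons, erase_val, Multiset.cons_erase (mem_univ i₀)]
  have ht : ∀ z ∈ t, z ∈ leftSector := by
    simpa [ht_def, ← erase_val] using hsector
  have hsum' : 0 ≤ (l i₀ ::ₘ t).sum.re := hcons ▸ hsum
  rw [hcons] at hconj
  have hreal : (l i₀).im = 0 := im_eq_zero_of_cons_sum_re_nonneg hconj ht hsum'
  rw [Multiset.map_cons, Complex.conj_eq_iff_im.2 hreal, Multiset.cons_inj_right] at hconj
  obtain ⟨p, hmap, hcoeff⟩ := exists_map_ofReal_eq_prod_coeff_nonpos hreal hconj ht hsum'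
  refine realizable_of_coeff_nonpos (hmap.trans ?_) hcoeff
  rw [← hcons, Multiset.map_map]
  rfl

/-- **Complex Suleimanova theorem.** Let `(λ_1, …, λ_n)` be closed under complex
conjugation with `λ_1` real, and suppose `Re λ_i ≤ 0` and `|Re λ_i| ≥ |Im λ_i|` for
`i ≥ 2`. Then the list is realizable iff `∑ λ_i ≥ 0` (the sum being real). -/
theorem complex_suleimanova (n : ℕ) (hn : 0 < n) (l : Fin n → ℂ)
    (hconj : Multiset.map (starRingEnd ℂ) (Finset.univ.val.map l) = Finset.univ.val.map l)
    (h1 : (l ⟨0, hn⟩).im = 0)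
    (h : ∀ i : Fin n, i ≠ ⟨0, hn⟩ → (l i).re ≤ 0 ∧ |(l i).im| ≤ |(l i).re|) :
    Realizable l ↔ 0 ≤ (∑ i, l i).re := by
  refine complex_suleimanova_general ⟨0, hn⟩ hconj fun i hi ↦ ⟨(h i hi).1, (h i hi).2.trans ?_⟩
  exact le_mul_of_one_le_left (abs_nonneg _) (Real.one_le_sqrt.2 (by norm_num))
end
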